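/- For every tempered distribution T ∈ S′(ℝ^d) there exists n ∈ ℕ such that ‖T‖_{−n}² := Σ_{β∈ℕ^d} (2|β|+d)^{−2n} T(h_β)² < ∞. -/

import Mathlib

open MeasureTheory

noncomputable def hermitePoly (n : ℕ) (x : ℝ) : ℝ :=
  (-1 : ℝ) ^ n * Real.exp (x ^ 2 / 2) *
    iteratedDeriv n (fun y : ℝ => Real.exp (-(y ^ 2 / 2))) x

noncomputable def hermiteFun (n : ℕ) (x : ℝ) : ℝ :=
  (Real.sqrt (Real.sqrt (2 * Real.pi) * n.factorial))⁻¹ *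
    Real.exp (-(x ^ 2 / 4)) * hermitePoly n x

noncomputable def hermiteFunMulti (d : ℕ) (α : Fin d → ℕ) (x : EuclideanSpace ℝ (Fin d)) : ℝ :=
  ∏ i, hermiteFun (α i) (x i)

/-!
Cauchy's estimate for `exp (-z² / 2)` on circles of radius `√(n + 1)`, together with Stirling's
bound for `n!`, shows that `h_n` grows at most like `(n + 1)^(1/4)` in `n`, uniformly in `x`. The
ladder relations turn multiplication by `x_i` and `∂_i` into shifts `β ± e_i` of the index with
coefficients of order `√β_i`. Hence every Schwartz seminorm of `h_β` grows at most polynomially in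
`|β|`, and so does `T(h_β)`, because `T` is bounded by finitely many of these seminorms. A large
enough negative power of `2|β| + d` compensates this growth and makes the series converge.
-/

open Asymptotics

section HermitePolynomial

open Polynomial in
theorem derivative_hermite_succ (n : ℕ) :
    derivative (hermite (n + 1)) = ((n : ℤ[X]) + 1) * hermite n := by
  induction n with
  | zero => simp [hermite_succ]
  | succ n ih =>
    have hconst : derivative ((n : ℤ[X]) + 1) = 0 := by simp
    rw [hermite_succ (n + 1), derivative_sub, derivative_mul, ih, derivative_X, derivative_mul,
      hconst, hermite_succ n]
    push_cast
    ring

theorem hermitePoly_eq_aeval (n : ℕ) (x : ℝ) :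
    hermitePoly n x = Polynomial.aeval x (Polynomial.hermite n) := by
  rw [hermitePoly, Polynomial.hermite_eq_deriv_gaussian', iteratedDeriv_eq_iterate]
  ring

-- For `n = 0` the index `n - 1` is truncated to `0`, but it always comes with a factor `n` or `√n`.

theorem hasDerivAt_hermitePoly (n : ℕ) (x : ℝ) :
    HasDerivAt (hermitePoly n) (n * hermitePoly (n - 1) x) x := by
  rw [funext (hermitePoly_eq_aeval n), hermitePoly_eq_aeval]
  refine (Polynomial.hasDerivAt_aeval _ x).congr_deriv ?_
  cases n with
  | zero => simp
  | succ n =>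
    rw [derivative_hermite_succ]
    simp

theorem hermitePoly_succ (n : ℕ) (x : ℝ) :
    hermitePoly (n + 1) x = x * hermitePoly n x - n * hermitePoly (n - 1) x := by
  rw [← (hasDerivAt_hermitePoly n x).deriv, funext (hermitePoly_eq_aeval n),
    (Polynomial.hasDerivAt_aeval _ x).deriv, hermitePoly_eq_aeval, Polynomial.hermite_succ]
  simp

theorem contDiff_hermitePoly (n : ℕ) {m : WithTop ℕ∞} : ContDiff ℝ m (hermitePoly n) := by
  rw [funext (hermitePoly_eq_aeval n)]
  exact Polynomial.contDiff_aeval _ _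

end HermitePolynomial

section Ladder

/-- The factor `((2π)^{1/2} n!)^{-1/2}` by which the Hermite function `hermiteFun n` is
normalised in `L²`. -/
noncomputable def hermiteNormalization (n : ℕ) : ℝ :=
  (√(√(2 * Real.pi) * n.factorial))⁻¹

theorem hermiteFun_eq (n : ℕ) (x : ℝ) :
    hermiteFun n x = hermiteNormalization n * Real.exp (-(x ^ 2 / 4)) * hermitePoly n x :=
  rfl

theorem sqrt_succ_mul_hermiteNormalization_succ (n : ℕ) :
    √(n + 1) * hermiteNormalization (n + 1) = hermiteNormalization n := by
  have hfactorial : √(2 * Real.pi) * ((n + 1).factorial : ℝ) =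
      (n + 1) * (√(2 * Real.pi) * n.factorial) := by
    rw [Nat.factorial_succ]
    push_cast
    ring
  rw [hermiteNormalization, hermiteNormalization, hfactorial, Real.sqrt_mul (by positivity),
    mul_inv, mul_inv_cancel_left₀ (by positivity)]

theorem nat_mul_hermiteNormalization (n : ℕ) :
    n * hermiteNormalization n = √n * hermiteNormalization (n - 1) := by
  cases n with
  | zero => simp
  | succ n =>
    rw [Nat.add_sub_cancel, ← sqrt_succ_mul_hermiteNormalization_succ n, ← mul_assoc,
      Nat.cast_succ, Real.mul_self_sqrt (by positivity)]

theorem mul_hermiteFun (n : ℕ) (x : ℝ) :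
    x * hermiteFun n x = √n * hermiteFun (n - 1) x + √(n + 1) * hermiteFun (n + 1) x := by
  simp only [hermiteFun_eq, hermitePoly_succ]
  linear_combination Real.exp (-(x ^ 2 / 4)) *
    (hermitePoly (n - 1) x * nat_mul_hermiteNormalization n -
      (x * hermitePoly n x - n * hermitePoly (n - 1) x) *
        sqrt_succ_mul_hermiteNormalization_succ n)

theorem hasDerivAt_hermiteFun (n : ℕ) (x : ℝ) :
    HasDerivAt (hermiteFun n)
      (√n / 2 * hermiteFun (n - 1) x - √(n + 1) / 2 * hermiteFun (n + 1) x) x := by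
  have hgauss : HasDerivAt (fun y : ℝ => Real.exp (-(y ^ 2 / 4)))
      (Real.exp (-(x ^ 2 / 4)) * -(x / 2)) x :=
    ((hasDerivAt_pow 2 x).div_const 4).fun_neg.exp.congr_deriv (by norm_num; ring)
  refine ((hgauss.const_mul (hermiteNormalization n)).mul
    (hasDerivAt_hermitePoly n x)).congr_deriv ?_
  have hmul := mul_hermiteFun n x
  simp only [hermiteFun_eq] at hmul ⊢
  linear_combination -(1 / 2) * hmul +
    Real.exp (-(x ^ 2 / 4)) * hermitePoly (n - 1) x * nat_mul_hermiteNormalization n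

theorem contDiff_hermiteFun (n : ℕ) {m : WithTop ℕ∞} : ContDiff ℝ m (hermiteFun n) := by
  have hpoly : ContDiff ℝ m (hermitePoly n) := contDiff_hermitePoly n
  unfold hermiteFun
  fun_prop

end Ladder

section UniformBound

theorem iteratedDeriv_ofReal_of_eqOn_real {f : ℂ → ℂ} {g : ℝ → ℝ} (hf : Differentiable ℂ f)
    (hfg : ∀ x : ℝ, f x = g x) (n : ℕ) (x : ℝ) :
    iteratedDeriv n f x = iteratedDeriv n g x := by
  induction n generalizing f g with
  | zero => simpa using hfg x
  | succ n ih =>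
    rw [iteratedDeriv_succ', iteratedDeriv_succ']
    refine ih hf.deriv fun y => ?_
    have hg : HasDerivAt g (deriv f y).re y := by
      simpa only [hfg, Complex.ofReal_re] using (hf (y : ℂ)).hasDerivAt.real_of_complex
    have hfy : HasDerivAt (fun t : ℝ => f t) (deriv f y) y := (hf (y : ℂ)).hasDerivAt.comp_ofReal
    simp only [hfg] at hfy
    rw [hg.deriv]
    exact hfy.unique hg.ofReal_comp

theorem norm_cexp_neg_sq_half_le {x r : ℝ} {z : ℂ} (hz : z ∈ Metric.sphere (x : ℂ) r) :
    ‖Complex.exp (-(z ^ 2 / 2))‖ ≤ Real.exp (r ^ 2 / 2 - x ^ 2 / 4) := by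
  have hcircle : (z.re - x) ^ 2 + z.im ^ 2 = r ^ 2 := by
    rw [← mem_sphere_iff_norm.1 hz, Complex.sq_norm, Complex.normSq_apply]
    simp only [Complex.sub_re, Complex.sub_im, Complex.ofReal_re, Complex.ofReal_im]
    ring
  have hre : (-(z ^ 2 / 2)).re = (z.im ^ 2 - z.re ^ 2) / 2 := by
    simp [pow_two]
    ring
  rw [Complex.norm_exp, hre, Real.exp_le_exp]
  -- `x² ≤ 2 ((Re z)² + (x - Re z)²)`
  nlinarith [sq_nonneg (2 * z.re - x)]

theorem abs_iteratedDeriv_gaussian_le (n : ℕ) (x : ℝ) {r : ℝ} (hr : 0 < r) :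
    |iteratedDeriv n (fun y : ℝ => Real.exp (-(y ^ 2 / 2))) x| ≤
      n.factorial * Real.exp (r ^ 2 / 2 - x ^ 2 / 4) / r ^ n := by
  have hentire : Differentiable ℂ fun z : ℂ => Complex.exp (-(z ^ 2 / 2)) := by fun_prop
  have hcauchy := Complex.norm_iteratedDeriv_le_of_forall_mem_sphere_norm_le n hr
    hentire.diffContOnCl fun z => norm_cexp_neg_sq_half_le (x := x)
  rwa [iteratedDeriv_ofReal_of_eqOn_real (g := fun y : ℝ => Real.exp (-(y ^ 2 / 2))) hentire
    fun y => by push_cast; rfl, Complex.norm_real] at hcauchy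

theorem hermiteFun_sq_le_of_pos (n : ℕ) (x : ℝ) {r : ℝ} (hr : 0 < r) :
    hermiteFun n x ^ 2 ≤ n.factorial * Real.exp (r ^ 2) / (r ^ 2) ^ n / √(2 * Real.pi) := by
  have hhermite : hermiteFun n x ^ 2 = Real.exp (x ^ 2 / 2) / (√(2 * Real.pi) * n.factorial) *
      |iteratedDeriv n (fun y : ℝ => Real.exp (-(y ^ 2 / 2))) x| ^ 2 := by
    have hsign : ((-1 : ℝ) ^ n) ^ 2 = 1 := by rw [pow_right_comm, neg_one_sq, one_pow]
    rw [hermiteFun, hermitePoly, sq_abs]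
    simp only [mul_pow, inv_pow, hsign, ← Real.exp_nat_mul]
    rw [Real.sq_sqrt (by positivity), show Real.exp (x ^ 2 / 2) =
      Real.exp ((2 : ℕ) * -(x ^ 2 / 4)) * Real.exp ((2 : ℕ) * (x ^ 2 / 2)) by
        rw [← Real.exp_add]; congr 1; push_cast; ring]
    ring
  have hexp : Real.exp (x ^ 2 / 2) * Real.exp (r ^ 2 / 2 - x ^ 2 / 4) ^ 2 = Real.exp (r ^ 2) := by
    rw [← Real.exp_nat_mul, ← Real.exp_add]
    congr 1
    push_cast
    ring
  calc hermiteFun n x ^ 2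
      ≤ Real.exp (x ^ 2 / 2) / (√(2 * Real.pi) * n.factorial) *
          (n.factorial * Real.exp (r ^ 2 / 2 - x ^ 2 / 4) / r ^ n) ^ 2 := by
        rw [hhermite]
        gcongr
        exact abs_iteratedDeriv_gaussian_le n x hr
    _ = n.factorial * Real.exp (r ^ 2) / (r ^ 2) ^ n / √(2 * Real.pi) := by
        rw [← hexp]
        field_simp
        ring

theorem factorial_le_exp_one_mul_sqrt_mul_pow {n : ℕ} (hn : n ≠ 0) :
    n.factorial ≤ Real.exp 1 * √n * (n / Real.exp 1) ^ n := by
  obtain ⟨m, rfl⟩ := Nat.exists_eq_succ_of_ne_zero hn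
  have hstirling : Stirling.stirlingSeq (m + 1) ≤ Real.exp 1 / √2 :=
    Stirling.stirlingSeq_one ▸ Stirling.stirlingSeq'_antitone m.zero_le
  rw [Stirling.stirlingSeq, div_le_iff₀ (by positivity), Real.sqrt_mul zero_le_two] at hstirling
  refine hstirling.trans_eq ?_
  field_simp

theorem hermiteFun_sq_le (n : ℕ) (x : ℝ) :
    hermiteFun n x ^ 2 ≤ Real.exp 1 * √(n + 1) / √(2 * Real.pi) := by
  -- `n! e^(r²) / r^(2n)` is minimal at `r² = n`, and `r² = n + 1` also covers `n = 0`.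
  have hcauchy := hermiteFun_sq_le_of_pos n x (r := √(n + 1)) (by positivity)
  have hstirling := factorial_le_exp_one_mul_sqrt_mul_pow n.succ_ne_zero
  rw [Real.sq_sqrt (by positivity)] at hcauchy
  refine hcauchy.trans ?_
  gcongr
  rw [Nat.factorial_succ, div_pow, ← Real.exp_nat_mul, mul_one] at hstirling
  push_cast at hstirling
  rw [div_le_iff₀ (by positivity)]
  rw [mul_div_assoc', le_div_iff₀ (by positivity), pow_succ] at hstirling
  refine le_of_mul_le_mul_left ?_ (by positivity : (0 : ℝ) < n + 1)
  linear_combination hstirling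

theorem abs_hermiteFun_le (n : ℕ) (x : ℝ) : |hermiteFun n x| ≤ 2 * (n + 1) := by
  have hpi : 1 ≤ √(2 * Real.pi) := Real.one_le_sqrt.2 (by linarith [Real.pi_gt_three])
  have hsqrt : √(n + 1 : ℝ) ≤ n + 1 := Real.sqrt_le_self_iff.2 (.inr (by simp))
  refine abs_le_of_sq_le_sq ?_ (by positivity)
  calc hermiteFun n x ^ 2
      ≤ Real.exp 1 * √(n + 1) / √(2 * Real.pi) := hermiteFun_sq_le n x
    _ ≤ Real.exp 1 * √(n + 1) := div_le_self (by positivity) hpi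
    _ ≤ 4 * (n + 1) := by
        gcongr
        linarith [Real.exp_one_lt_d9]
    _ ≤ (2 * (n + 1)) ^ 2 := by nlinarith

end UniformBound

section MultiIndex

variable {d : ℕ} {β : Fin d → ℕ} {x : EuclideanSpace ℝ (Fin d)}

theorem hermiteFunMulti_eq_mul_prod_erase {γ : Fin d → ℕ} {i : Fin d} (h : ∀ j ≠ i, γ j = β j) :
    hermiteFunMulti d γ x =
      hermiteFun (γ i) (x i) * ∏ j ∈ Finset.univ.erase i, hermiteFun (β j) (x j) := by
  rw [hermiteFunMulti, ← Finset.mul_prod_erase _ _ (Finset.mem_univ i)]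
  congr 1
  exact Finset.prod_congr rfl fun j hj => by rw [h j (Finset.ne_of_mem_erase hj)]

theorem hermiteFunMulti_sub_single (i : Fin d) :
    hermiteFunMulti d (β - Pi.single i 1) x =
      hermiteFun (β i - 1) (x i) * ∏ j ∈ Finset.univ.erase i, hermiteFun (β j) (x j) := by
  rw [hermiteFunMulti_eq_mul_prod_erase (β := β) (i := i) fun j hj => by simp [hj]]
  simp

theorem hermiteFunMulti_add_single (i : Fin d) :
    hermiteFunMulti d (β + Pi.single i 1) x =
      hermiteFun (β i + 1) (x i) * ∏ j ∈ Finset.univ.erase i, hermiteFun (β j) (x j) := by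
  rw [hermiteFunMulti_eq_mul_prod_erase (β := β) (i := i) fun j hj => by simp [hj]]
  simp

theorem coord_mul_hermiteFunMulti (i : Fin d) :
    x i * hermiteFunMulti d β x =
      √(β i) * hermiteFunMulti d (β - Pi.single i 1) x +
        √(β i + 1) * hermiteFunMulti d (β + Pi.single i 1) x := by
  rw [hermiteFunMulti_sub_single, hermiteFunMulti_add_single,
    hermiteFunMulti_eq_mul_prod_erase (i := i) fun _ _ => rfl]
  linear_combination (∏ j ∈ Finset.univ.erase i, hermiteFun (β j) (x j)) *
    mul_hermiteFun (β i) (x i)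

theorem fderiv_hermiteFunMulti :
    fderiv ℝ (hermiteFunMulti d β) = fun x =>
      ∑ i, (√(β i) / 2 * hermiteFunMulti d (β - Pi.single i 1) x -
        √(β i + 1) / 2 * hermiteFunMulti d (β + Pi.single i 1) x) •
          (EuclideanSpace.proj i : EuclideanSpace ℝ (Fin d) →L[ℝ] ℝ) := by
  ext1 x
  have hfactor (i : Fin d) := (hasDerivAt_hermiteFun (β i) (x i)).comp_hasFDerivAt x
    (EuclideanSpace.proj i : EuclideanSpace ℝ (Fin d) →L[ℝ] ℝ).hasFDerivAt
  refine (HasFDerivAt.finsetProd fun i _ => hfactor i).fderiv.trans ?_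
  refine Finset.sum_congr rfl fun i _ => ?_
  rw [hermiteFunMulti_sub_single, hermiteFunMulti_add_single, smul_smul]
  congr 1
  simp only [Function.comp_apply, PiLp.proj_apply]
  ring

theorem contDiff_hermiteFunMulti (β : Fin d → ℕ) {m : WithTop ℕ∞} :
    ContDiff ℝ m (hermiteFunMulti d β) :=
  contDiff_prod fun i _ => (contDiff_hermiteFun (β i)).comp
    (EuclideanSpace.proj i : EuclideanSpace ℝ (Fin d) →L[ℝ] ℝ).contDiff

theorem euclideanSpace_norm_le_sum_abs {ι : Type*} [Fintype ι] (x : EuclideanSpace ℝ ι) :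
    ‖x‖ ≤ ∑ i, |x i| := by
  refine le_of_sq_le_sq ?_ (by positivity)
  simpa only [EuclideanSpace.real_norm_sq_eq, sq_abs] using
    Finset.sum_sq_le_sq_sum_of_nonneg (s := Finset.univ) fun i _ => abs_nonneg (x i)

theorem norm_mul_norm_hermiteFunMulti_le (β : Fin d → ℕ) (x : EuclideanSpace ℝ (Fin d)) :
    ‖x‖ * ‖hermiteFunMulti d β x‖ ≤
      ∑ i, (√(β i) * ‖hermiteFunMulti d (β - Pi.single i 1) x‖ +
        √(β i + 1) * ‖hermiteFunMulti d (β + Pi.single i 1) x‖) := by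
  calc ‖x‖ * ‖hermiteFunMulti d β x‖
      ≤ (∑ i, |x i|) * ‖hermiteFunMulti d β x‖ := by
        gcongr
        exact euclideanSpace_norm_le_sum_abs x
    _ = ∑ i, ‖x i * hermiteFunMulti d β x‖ := by
        simp only [Finset.sum_mul, norm_mul, Real.norm_eq_abs]
    _ ≤ _ := by
        gcongr with i
        rw [coord_mul_hermiteFunMulti]
        refine (norm_add_le _ _).trans_eq ?_
        simp only [norm_mul, Real.norm_of_nonneg (Real.sqrt_nonneg _)]

theorem norm_iteratedFDeriv_smul_const_le {E F : Type*} [NormedAddCommGroup E] [NormedSpace ℝ E]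
    [NormedAddCommGroup F] [NormedSpace ℝ F] {n : ℕ} {f : E → ℝ} {x : E} (hf : ContDiffAt ℝ n f x)
    (v : F) :
    ‖iteratedFDeriv ℝ n (fun y => f y • v) x‖ ≤ ‖v‖ * ‖iteratedFDeriv ℝ n f x‖ := by
  rw [← ContinuousLinearMap.norm_toSpanSingleton (𝕜 := ℝ) v]
  exact (ContinuousLinearMap.toSpanSingleton ℝ v).norm_iteratedFDeriv_comp_left hf le_rfl

theorem norm_iteratedFDeriv_mul_sub_mul_le {E : Type*} [NormedAddCommGroup E] [NormedSpace ℝ E]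
    {n : ℕ} {f g : E → ℝ} {x : E} (hf : ContDiffAt ℝ n f x) (hg : ContDiffAt ℝ n g x) (a b : ℝ) :
    ‖iteratedFDeriv ℝ n (fun y => a * f y - b * g y) x‖ ≤
      |a| * ‖iteratedFDeriv ℝ n f x‖ + |b| * ‖iteratedFDeriv ℝ n g x‖ := by
  change ‖iteratedFDeriv ℝ n ((fun y => a • f y) - fun y => b • g y) x‖ ≤ _
  rw [iteratedFDeriv_sub_apply (hf.const_smul a) (hg.const_smul b),
    iteratedFDeriv_const_smul_apply' hf, iteratedFDeriv_const_smul_apply' hg]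
  refine (norm_sub_le _ _).trans_eq ?_
  simp only [norm_smul, Real.norm_eq_abs]

theorem norm_iteratedFDeriv_succ_hermiteFunMulti_le (n : ℕ) (β : Fin d → ℕ)
    (x : EuclideanSpace ℝ (Fin d)) :
    ‖iteratedFDeriv ℝ (n + 1) (hermiteFunMulti d β) x‖ ≤
      ∑ i, (√(β i) * ‖iteratedFDeriv ℝ n (hermiteFunMulti d (β - Pi.single i 1)) x‖ +
        √(β i + 1) * ‖iteratedFDeriv ℝ n (hermiteFunMulti d (β + Pi.single i 1)) x‖) := by
  have hsmooth (γ : Fin d → ℕ) : ContDiff ℝ n (hermiteFunMulti d γ) := contDiff_hermiteFunMulti γ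
  have hproj (i : Fin d) : ‖(EuclideanSpace.proj i : EuclideanSpace ℝ (Fin d) →L[ℝ] ℝ)‖ ≤ 1 :=
    ContinuousLinearMap.opNorm_le_bound _ zero_le_one fun y =>
      (PiLp.norm_apply_le y i).trans_eq (one_mul _).symm
  have hhalf (t : ℝ) : |√t / 2| ≤ √t := by
    rw [abs_of_nonneg (by positivity)]
    exact half_le_self (by positivity)
  have hcoeff (i : Fin d) : ContDiff ℝ n fun y =>
      √(β i) / 2 * hermiteFunMulti d (β - Pi.single i 1) y -
        √(β i + 1) / 2 * hermiteFunMulti d (β + Pi.single i 1) y :=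
    (contDiff_const.mul (hsmooth _)).sub (contDiff_const.mul (hsmooth _))
  rw [← norm_iteratedFDeriv_fderiv, fderiv_hermiteFunMulti,
    iteratedFDeriv_fun_sum_apply fun i _ => ((hcoeff i).fun_smul contDiff_const).contDiffAt]
  refine norm_sum_le_of_le _ fun i _ => ?_
  refine (norm_iteratedFDeriv_smul_const_le (hcoeff i).contDiffAt _).trans ?_
  refine (mul_le_of_le_one_left (norm_nonneg _) (hproj i)).trans ?_
  refine (norm_iteratedFDeriv_mul_sub_mul_le (hsmooth _).contDiffAt (hsmooth _).contDiffAt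
    _ _).trans ?_
  gcongr <;> exact hhalf _

end MultiIndex

section PolynomialGrowth

/-- A function on an arbitrary index type is bounded by a constant multiple of some power of the
weight `w`. The exponent and the constant are uniform over the whole index type. -/
def IsPolyBounded {A E : Type*} [Norm E] (w : A → ℝ) (f : A → E) : Prop :=
  ∃ N : ℕ, f =O[⊤] fun a => w a ^ N

namespace IsPolyBounded

variable {A B ι E F R : Type*} {w : A → ℝ}

theorem of_norm_le [Norm E] [Norm F] {f : A → E} {g : A → F}
    (hg : IsPolyBounded w g) (h : ∀ a, ‖f a‖ ≤ ‖g a‖) : IsPolyBounded w f :=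
  let ⟨N, hN⟩ := hg
  let ⟨C, hC⟩ := isBigO_top.1 hN
  ⟨N, isBigO_top.2 ⟨C, fun a => (h a).trans (hC a)⟩⟩

theorem of_le {f g : A → ℝ} (hg : IsPolyBounded w g) (hf : ∀ a, 0 ≤ f a) (h : ∀ a, f a ≤ g a) :
    IsPolyBounded w f :=
  hg.of_norm_le fun a =>
    ((Real.norm_of_nonneg (hf a)).trans_le (h a)).trans (Real.le_norm_self _)

theorem weight (w : A → ℝ) : IsPolyBounded w w :=
  ⟨1, by simpa only [pow_one] using isBigO_refl w ⊤⟩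

theorem const [Norm E] (w : A → ℝ) (c : E) : IsPolyBounded w fun _ => c :=
  ⟨0, by simpa only [pow_zero] using isBigO_const_const c one_ne_zero ⊤⟩

theorem mul [SeminormedRing R] {f g : A → R} (hf : IsPolyBounded w f)
    (hg : IsPolyBounded w g) : IsPolyBounded w fun a => f a * g a :=
  let ⟨M, hM⟩ := hf
  let ⟨N, hN⟩ := hg
  ⟨M + N, by simpa only [pow_add] using hM.mul hN⟩

theorem prod [SeminormedCommRing R] {s : Finset ι} {f : ι → A → R}
    (hf : ∀ i ∈ s, IsPolyBounded w (f i)) : IsPolyBounded w fun a => ∏ i ∈ s, f i a := by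
  induction s using Finset.cons_induction with
  | empty => simpa only [Finset.prod_empty] using const w 1
  | cons i s hi ih =>
    simp only [Finset.prod_cons]
    exact (hf i (Finset.mem_cons_self i s)).mul (ih fun j hj => hf j (Finset.mem_cons_of_mem hj))

theorem add [SeminormedAddCommGroup E] (hw : ∀ a, 1 ≤ w a) {f g : A → E}
    (hf : IsPolyBounded w f) (hg : IsPolyBounded w g) : IsPolyBounded w fun a => f a + g a := by
  obtain ⟨M, hM⟩ := hf
  obtain ⟨N, hN⟩ := hg
  have hmono {k l : ℕ} (hkl : k ≤ l) : (fun a => w a ^ k) =O[⊤] fun a => w a ^ l :=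
    isBigO_of_le ⊤ fun a => by
      simpa only [norm_pow] using pow_le_pow_right₀ ((hw a).trans (Real.le_norm_self _)) hkl
  exact ⟨max M N, (hM.trans (hmono (le_max_left M N))).add (hN.trans (hmono (le_max_right M N)))⟩

theorem sum [SeminormedAddCommGroup E] (hw : ∀ a, 1 ≤ w a) {s : Finset ι} {f : ι → A → E}
    (hf : ∀ i ∈ s, IsPolyBounded w (f i)) : IsPolyBounded w fun a => ∑ i ∈ s, f i a := by
  induction s using Finset.cons_induction with
  | empty => simpa only [Finset.sum_empty] using const w 0
  | cons i s hi ih =>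
    simp only [Finset.sum_cons]
    exact (hf i (Finset.mem_cons_self i s)).add hw
      (ih fun j hj => hf j (Finset.mem_cons_of_mem hj))

theorem sqrt (hw : ∀ a, 1 ≤ w a) {f : A → ℝ} (hf : IsPolyBounded w f) :
    IsPolyBounded w fun a => √(f a) := by
  have hnorm : IsPolyBounded w fun a => ‖f a‖ := hf.of_norm_le fun a => (norm_norm _).le
  refine ((const w 1).add hw hnorm).of_le (fun a => Real.sqrt_nonneg _) fun a => ?_
  refine Real.sqrt_le_iff.2 ⟨by positivity, ?_⟩
  nlinarith [Real.le_norm_self (f a), norm_nonneg (f a)]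

theorem comp [Norm E] {v : B → ℝ} {f : A → E} (hf : IsPolyBounded w f) {σ : B → A}
    (hσ : (fun b => w (σ b)) =O[⊤] v) : IsPolyBounded v fun b => f (σ b) :=
  let ⟨N, hN⟩ := hf
  ⟨N, (hN.comp_tendsto le_top).trans (hσ.pow N)⟩

end IsPolyBounded

/-- The weight `1 + |β|` of a multi-index `β`, as a real number. -/
def multiIndexWeight {ι : Type*} [Fintype ι] (β : ι → ℕ) : ℝ :=
  1 + ∑ i, (β i : ℝ)

section MultiIndexWeight

variable {ι A E : Type*} [Fintype ι]

theorem one_le_multiIndexWeight (β : ι → ℕ) : 1 ≤ multiIndexWeight β := by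
  rw [multiIndexWeight, le_add_iff_nonneg_right]
  positivity

theorem multiIndexWeight_pos (β : ι → ℕ) : 0 < multiIndexWeight β :=
  zero_lt_one.trans_le (one_le_multiIndexWeight β)

theorem norm_multiIndexWeight (β : ι → ℕ) : ‖multiIndexWeight β‖ = multiIndexWeight β :=
  Real.norm_of_nonneg (multiIndexWeight_pos β).le

theorem add_one_le_multiIndexWeight (β : ι → ℕ) (i : ι) : β i + 1 ≤ multiIndexWeight β := by
  rw [multiIndexWeight, add_comm]
  gcongr
  exact Finset.single_le_sum (f := fun j => (β j : ℝ)) (fun j _ => Nat.cast_nonneg _)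
    (Finset.mem_univ i)

theorem multiIndexWeight_mono : Monotone (multiIndexWeight : (ι → ℕ) → ℝ) := fun β γ h => by
  unfold multiIndexWeight
  gcongr with i
  exact h i

theorem multiIndexWeight_add (β γ : ι → ℕ) :
    multiIndexWeight (β + γ) = multiIndexWeight β + ∑ i, (γ i : ℝ) := by
  simp only [multiIndexWeight, Pi.add_apply, Nat.cast_add, Finset.sum_add_distrib, add_assoc]

theorem IsPolyBounded.multiIndex_apply (i : ι) :
    IsPolyBounded (fun p => multiIndexWeight p.1) fun p : (ι → ℕ) × A => (p.1 i : ℝ) :=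
  (weight _).of_le (fun _ => Nat.cast_nonneg _) fun p =>
    (lt_add_one _).le.trans (add_one_le_multiIndexWeight p.1 i)

variable [DecidableEq ι] [Norm E]

theorem IsPolyBounded.multiIndex_add_single {f : (ι → ℕ) × A → E}
    (hf : IsPolyBounded (fun p => multiIndexWeight p.1) f) (i : ι) :
    IsPolyBounded (fun p => multiIndexWeight p.1)
      fun p : (ι → ℕ) × A => f (p.1 + Pi.single i 1, p.2) := by
  refine hf.comp (isBigO_top.2 ⟨2, fun p : (ι → ℕ) × A => ?_⟩)
  have hsingle : ∑ j, ((Pi.single i 1 : ι → ℕ) j : ℝ) = 1 := by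
    rw [← Nat.cast_sum, Finset.sum_pi_single', if_pos (Finset.mem_univ i), Nat.cast_one]
  rw [norm_multiIndexWeight, norm_multiIndexWeight, multiIndexWeight_add, hsingle]
  linarith [one_le_multiIndexWeight p.1]

theorem IsPolyBounded.multiIndex_sub_single {f : (ι → ℕ) × A → E}
    (hf : IsPolyBounded (fun p => multiIndexWeight p.1) f) (i : ι) :
    IsPolyBounded (fun p => multiIndexWeight p.1)
      fun p : (ι → ℕ) × A => f (p.1 - Pi.single i 1, p.2) := by
  refine hf.comp (isBigO_of_le ⊤ fun p : (ι → ℕ) × A => ?_)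
  simpa only [norm_multiIndexWeight] using multiIndexWeight_mono tsub_le_self

theorem IsPolyBounded.ladder_sum {f : (ι → ℕ) × A → ℝ}
    (hf : IsPolyBounded (fun p => multiIndexWeight p.1) f) :
    IsPolyBounded (fun p => multiIndexWeight p.1) fun p : (ι → ℕ) × A =>
      ∑ i, (√(p.1 i) * f (p.1 - Pi.single i 1, p.2) +
        √(p.1 i + 1) * f (p.1 + Pi.single i 1, p.2)) := by
  have hweight (p : (ι → ℕ) × A) := one_le_multiIndexWeight p.1
  refine sum hweight fun i _ => add hweight ?_ ?_
  · exact ((multiIndex_apply i).sqrt hweight).mul (hf.multiIndex_sub_single i)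
  · exact (((multiIndex_apply i).add hweight (const _ 1)).sqrt hweight).mul
      (hf.multiIndex_add_single i)

end MultiIndexWeight

end PolynomialGrowth

section SeminormGrowth

variable {d : ℕ}

theorem isPolyBounded_hermiteFunMulti :
    IsPolyBounded (fun p : (Fin d → ℕ) × EuclideanSpace ℝ (Fin d) => multiIndexWeight p.1)
      fun p => hermiteFunMulti d p.1 p.2 := by
  refine IsPolyBounded.prod fun i _ =>
    ((IsPolyBounded.const _ (2 : ℝ)).mul (IsPolyBounded.weight _)).of_norm_le fun p => ?_
  refine (abs_hermiteFun_le _ _).trans (le_trans ?_ (Real.le_norm_self _))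
  gcongr
  exact add_one_le_multiIndexWeight p.1 i

theorem isPolyBounded_pow_mul_norm_hermiteFunMulti (k : ℕ) :
    IsPolyBounded (fun p : (Fin d → ℕ) × EuclideanSpace ℝ (Fin d) => multiIndexWeight p.1)
      fun p => ‖p.2‖ ^ k * ‖hermiteFunMulti d p.1 p.2‖ := by
  induction k with
  | zero => exact isPolyBounded_hermiteFunMulti.of_norm_le fun p => by simp
  | succ k ih =>
    refine (IsPolyBounded.ladder_sum ih).of_le (fun p => by positivity) fun p => ?_
    rw [pow_succ, mul_assoc]
    refine (mul_le_mul_of_nonneg_left (norm_mul_norm_hermiteFunMulti_le p.1 p.2)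
      (by positivity)).trans_eq ?_
    simp only [Finset.mul_sum, mul_add, mul_left_comm]

theorem isPolyBounded_pow_mul_norm_iteratedFDeriv_hermiteFunMulti (k n : ℕ) :
    IsPolyBounded (fun p : (Fin d → ℕ) × EuclideanSpace ℝ (Fin d) => multiIndexWeight p.1)
      fun p => ‖p.2‖ ^ k * ‖iteratedFDeriv ℝ n (hermiteFunMulti d p.1) p.2‖ := by
  induction n with
  | zero => simpa only [norm_iteratedFDeriv_zero] using isPolyBounded_pow_mul_norm_hermiteFunMulti k
  | succ n ih =>
    refine (IsPolyBounded.ladder_sum ih).of_le (fun p => by positivity) fun p => ?_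
    refine (mul_le_mul_of_nonneg_left (norm_iteratedFDeriv_succ_hermiteFunMulti_le n p.1 p.2)
      (by positivity)).trans_eq ?_
    simp only [Finset.mul_sum, mul_add, mul_left_comm]

variable {h : (Fin d → ℕ) → SchwartzMap (EuclideanSpace ℝ (Fin d)) ℝ}

theorem isPolyBounded_schwartzSeminorm (hh : ∀ β x, h β x = hermiteFunMulti d β x) (k n : ℕ) :
    IsPolyBounded multiIndexWeight fun β => SchwartzMap.seminorm ℝ k n (h β) := by
  obtain ⟨N, hN⟩ := isPolyBounded_pow_mul_norm_iteratedFDeriv_hermiteFunMulti (d := d) k n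
  obtain ⟨C, hC⟩ := isBigO_top.1 hN
  refine ⟨N, isBigO_top.2 ⟨C, fun β => ?_⟩⟩
  have hCβ (x : EuclideanSpace ℝ (Fin d)) :
      ‖x‖ ^ k * ‖iteratedFDeriv ℝ n (h β) x‖ ≤ C * ‖multiIndexWeight β ^ N‖ := by
    simpa only [funext (hh β), norm_mul, norm_norm, norm_pow] using hC (β, x)
  rw [Real.norm_of_nonneg (apply_nonneg _ _)]
  exact SchwartzMap.seminorm_le_bound ℝ k n (h β) (le_trans (by positivity) (hCβ 0)) hCβ

theorem isPolyBounded_seminorm_of_continuous (hh : ∀ β x, h β x = hermiteFunMulti d β x)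
    {p : Seminorm ℝ (SchwartzMap (EuclideanSpace ℝ (Fin d)) ℝ)} (hp : Continuous p) :
    IsPolyBounded multiIndexWeight fun β => p (h β) := by
  obtain ⟨s, C, -, hle⟩ := Seminorm.bound_of_continuous
    (schwartz_withSeminorms ℝ (EuclideanSpace ℝ (Fin d)) ℝ) p hp
  have hsum := IsPolyBounded.sum one_le_multiIndexWeight (s := s)
    fun m _ => isPolyBounded_schwartzSeminorm hh m.1 m.2
  refine ((IsPolyBounded.const _ (C : ℝ)).mul hsum).of_le
    (fun β => apply_nonneg _ _) fun β => ?_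
  refine (hle (h β)).trans ?_
  refine mul_le_mul_of_nonneg_left ?_ C.coe_nonneg
  refine (Seminorm.finset_sup_le_sum (schwartzSeminormFamily ℝ _ ℝ) s (h β)).trans_eq ?_
  simp [schwartzSeminormFamily]

end SeminormGrowth

section Summability

theorem summable_pi_prod {ι : Type*} {κ : ι → Type*} [Fintype ι] {f : ∀ i, κ i → ℝ}
    (hf : ∀ i k, 0 ≤ f i k) (hsum : ∀ i, Summable (f i)) :
    Summable fun β : ∀ i, κ i => ∏ i, f i (β i) := by
  classical
  refine summable_of_sum_le (c := ∏ i, ∑' k, f i k)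
    (fun β => Finset.prod_nonneg fun i _ => hf i (β i)) fun s => ?_
  calc ∑ β ∈ s, ∏ i, f i (β i)
      ≤ ∑ β ∈ Fintype.piFinset fun i => s.image (· i), ∏ i, f i (β i) :=
        Finset.sum_le_sum_of_subset_of_nonneg
          (fun β hβ => Fintype.mem_piFinset.2 fun i => Finset.mem_image_of_mem (· i) hβ)
          fun β _ _ => Finset.prod_nonneg fun i _ => hf i (β i)
    _ = ∏ i, ∑ k ∈ s.image (· i), f i k := (Finset.prod_univ_sum _ _).symm
    _ ≤ ∏ i, ∑' k, f i k :=
        Finset.prod_le_prod (fun i _ => Finset.sum_nonneg fun k _ => hf i k)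
          fun i _ => (hsum i).sum_le_tsum _ fun k _ => hf i k

theorem summable_inv_multiIndexWeight_pow {ι : Type*} [Fintype ι] :
    Summable fun β : ι → ℕ => (multiIndexWeight β ^ (2 * Fintype.card ι))⁻¹ := by
  have hfactor : Summable fun k : ℕ => (((k : ℝ) + 1) ^ 2)⁻¹ := by
    simpa using (summable_nat_add_iff 1).2 (Real.summable_nat_pow_inv.2 one_lt_two)
  refine (summable_pi_prod (fun _ k => by positivity) fun _ : ι => hfactor).of_nonneg_of_le
    (fun β => ?_) fun β => ?_
  · have := multiIndexWeight_pos β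
    positivity
  · rw [Finset.prod_inv_distrib, pow_mul, ← Finset.card_univ, ← Finset.prod_const]
    gcongr with i
    exact add_one_le_multiIndexWeight β i

theorem IsPolyBounded.exists_summable {ι : Type*} [Fintype ι] {f : (ι → ℕ) → ℝ}
    (hf : IsPolyBounded multiIndexWeight f) :
    ∃ n : ℕ, Summable fun β => (multiIndexWeight β ^ (2 * n))⁻¹ * f β ^ 2 := by
  obtain ⟨N, hN⟩ := hf
  obtain ⟨C, hC⟩ := isBigO_top.1 hN
  refine ⟨Fintype.card ι + N, (summable_inv_multiIndexWeight_pow.mul_left (C ^ 2)).of_nonneg_of_le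
    (fun β => ?_) fun β => ?_⟩
  · have := multiIndexWeight_pos β
    positivity
  · have hpos := multiIndexWeight_pos β
    have hsq : f β ^ 2 ≤ (C * multiIndexWeight β ^ N) ^ 2 := by
      have hβ := hC β
      rw [norm_pow, norm_multiIndexWeight] at hβ
      exact sq_le_sq' (neg_le_of_abs_le hβ) (le_of_abs_le hβ)
    calc (multiIndexWeight β ^ (2 * (Fintype.card ι + N)))⁻¹ * f β ^ 2
        ≤ (multiIndexWeight β ^ (2 * (Fintype.card ι + N)))⁻¹ *
            (C * multiIndexWeight β ^ N) ^ 2 := by gcongr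
      _ = C ^ 2 * (multiIndexWeight β ^ (2 * Fintype.card ι))⁻¹ := by
        field_simp
        ring

end Summability

theorem tempered_distribution_negative_norm_finite_general (d : ℕ)
    (h : (Fin d → ℕ) → SchwartzMap (EuclideanSpace ℝ (Fin d)) ℝ)
    (hh : ∀ β x, h β x = hermiteFunMulti d β x)
    (p : Seminorm ℝ (SchwartzMap (EuclideanSpace ℝ (Fin d)) ℝ)) (hp : Continuous p) :
    ∃ n : ℕ, Summable (fun β : Fin d → ℕ =>
      ((((2 * ∑ i, β i) + d : ℕ) : ℝ) ^ (2 * n))⁻¹ * (p (h β)) ^ 2) := by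
  rcases Nat.eq_zero_or_pos d with rfl | hd
  · exact ⟨0, Summable.of_finite⟩
  obtain ⟨n, hn⟩ := (isPolyBounded_seminorm_of_continuous hh hp).exists_summable
  refine ⟨n, hn.of_nonneg_of_le (fun β => by positivity) fun β => ?_⟩
  have hweight : multiIndexWeight β ≤ ((2 * ∑ i, β i + d : ℕ) : ℝ) := by
    rw [multiIndexWeight]
    norm_cast
    omega
  have hpos := multiIndexWeight_pos β
  gcongr

/-- For every tempered distribution `T` there is `n` with
`Σ_β (2|β|+d)^{-2n} T(h_β)² < ∞`. -/
theorem tempered_distribution_negative_norm_finite (d : ℕ)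
    (h : (Fin d → ℕ) → SchwartzMap (EuclideanSpace ℝ (Fin d)) ℝ)
    (hh : ∀ β x, h β x = hermiteFunMulti d β x)
    (T : SchwartzMap (EuclideanSpace ℝ (Fin d)) ℝ →L[ℝ] ℝ) :
    ∃ n : ℕ, Summable (fun β : Fin d → ℕ =>
      ((((2 * ∑ i, β i) + d : ℕ) : ℝ) ^ (2 * n))⁻¹ * (T (h β)) ^ 2) := by
  simpa [sq_abs] using tempered_distribution_negative_norm_finite_general d h hh
    ((normSeminorm ℝ ℝ).comp T.toLinearMap) T.continuous.norm
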